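/- SATWAP SOS verification: let d ≥ 2 and let A_1, A_2, B_1, B_2 be unitary operators on a finite-dimensional Hilbert space with A_x^d = B_y^d = 1 for all x,y, such that every power of each A_x commutes with every power of each B_y. With a_k = exp(2πi(2k−d)/(8d))/√2, define C_1^{(k)} = a_k B_1^{−k} + conj(a_k) ω^k B_2^{−k} and C_2^{(k)} = conj(a_k) B_1^{−k} + a_k B_2^{−k}, where ω = exp(2πi/d), and define the Bell operator B_d = Σ_{k=1}^{d−1} (A_1^k C_1^{(k)} + A_2^k C_2^{(k)}). Then 2(d−1)·1 − B_d = (1/2) Σ_{k=1}^{d−1} (P_{1,k}† P_{1,k} + P_{2,k}† P_{2,k}) where P_{x,k} = (A_x^k)† − C_x^{(k)}. In particular ⟨ψ, B_d ψ⟩ ≤ 2(d−1) for every unit vector ψ. -/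

import Mathlib

open Matrix

/-!
Write `a = a_k`. The matrix `!![a, conj a * ω ^ k; conj a, a]`, which turns `(B₁⁻ᵏ, B₂⁻ᵏ)` into
`(C₁, C₂)`, is unitary because `ω ^ k = -4 a ^ 4` and `|a|² = 1/2`. Hence `C₁† C₁ + C₂† C₂ = 2`, and
expanding the squares gives `∑ₖ (P₁† P₁ + P₂† P₂) = 4 (d - 1) - (B_d + B_d†)`; evaluating this on
any state bounds `B_d`. Taking adjoints exchanges the summands of `B_d` at `k` and `d - k`, so
`B_d + B_d† = 2 B_d`.
-/

open Finset
open scoped ComplexConjugate ComplexOrder ComplexStarModule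

lemma sum_Icc_one_reflect {M : Type*} [AddCommMonoid M] (f : ℕ → M) (d : ℕ) :
    ∑ k ∈ Icc 1 (d - 1), f (d - k) = ∑ k ∈ Icc 1 (d - 1), f k := by
  refine sum_nbij' (d - ·) (d - ·) ?_ ?_ ?_ ?_ fun _ _ => rfl <;> simp only [mem_Icc] <;> omega

lemma star_pow_eq_pow_sub {M : Type*} [Monoid M] [StarMul M] {U : M} {d k : ℕ}
    (hU : U * star U = 1) (hUd : U ^ d = 1) (hk : k ≤ d) : star U ^ k = U ^ (d - k) :=
  (left_inv_eq_right_inv (by rw [← pow_add, Nat.sub_add_cancel hk, hUd])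
    (pow_mul_pow_eq_one k hU)).symm

lemma star_star_sub_mul_star_sub {R : Type*} [Ring R] [StarRing R] (a c : R) :
    star (star a - c) * (star a - c) =
      a * star a + star c * c - (a * c + star (a * c)) := by
  rw [star_sub, star_star, star_mul]
  noncomm_ring

/-- The hypotheses say that `!![p, q; r, s]` has orthonormal columns. -/
lemma star_mul_self_add_star_mul_self_of_orthonormal {K R : Type*} [CommRing K] [StarRing K]
    [Ring R] [StarRing R] [Algebra K R] [StarModule K R] {p q r s : K}
    (hpr : star p * p + star r * r = 1) (hqs : star q * q + star s * s = 1)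
    (horth : star p * q + star r * s = 0) (U V : R) :
    star (p • U + q • V) * (p • U + q • V) + star (r • U + s • V) * (r • U + s • V) =
      star U * U + star V * V := by
  have horth' : star q * p + star s * r = 0 := by
    simpa only [star_add, star_mul', star_star, star_zero, mul_comm] using congrArg star horth
  calc
    _ = (star p * p + star r * r) • (star U * U) + (star q * q + star s * s) • (star V * V) +
          (star p * q + star r * s) • (star U * V) +
          (star q * p + star s * r) • (star V * U) := by
      simp only [star_add, star_smul, add_mul, mul_add, smul_mul_smul_comm]
      module
    _ = star U * U + star V * V := by
      rw [hpr, hqs, horth, horth', one_smul, one_smul, zero_smul, zero_smul, add_zero, add_zero]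

section PositiveFunctional

variable {𝓐 : Type*} [Ring 𝓐] [StarRing 𝓐] [Algebra ℂ 𝓐] [StarModule ℂ 𝓐] {φ : 𝓐 →ₗ[ℂ] ℂ}

lemma re_map_star_of_nonneg (hφ : ∀ x, 0 ≤ φ (star x * x)) (x : 𝓐) :
    (φ (star x)).re = (φ x).re := by
  -- `φ` is real on `y† y` for `y = 1 + i x`.
  have hexpand : star (1 + Complex.I • x) * (1 + Complex.I • x) =
      star 1 * 1 + star x * x + Complex.I • (x - star x) := by
    simp only [star_add, star_one, star_smul, Complex.star_def, Complex.conj_I, add_mul, mul_add,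
      one_mul, mul_one, smul_mul_smul_comm, neg_mul, Complex.I_mul_I]
    module
  have him := (Complex.nonneg_iff.1 (hφ (1 + Complex.I • x))).2
  rw [hexpand, map_add, map_add, map_smul, map_sub, Complex.add_im, Complex.add_im,
    ← (Complex.nonneg_iff.1 (hφ 1)).2, ← (Complex.nonneg_iff.1 (hφ x)).2, smul_eq_mul,
    Complex.I_mul_im, Complex.sub_re] at him
  linarith

end PositiveFunctional

namespace Satwap

/-- The root of unity `ω = exp (2πi/d)`. -/
noncomputable def root (d : ℕ) : ℂ :=
  Complex.exp (2 * (Real.pi : ℂ) * Complex.I / (d : ℂ))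

/-- The SATWAP coefficient `a_k = exp (2πi(2k-d)/(8d)) / √2`. -/
noncomputable def coeff (d k : ℕ) : ℂ :=
  Complex.exp (2 * (Real.pi : ℂ) * Complex.I * (2 * (k : ℂ) - (d : ℂ)) / (8 * (d : ℂ))) /
    (Real.sqrt 2 : ℂ)

section Coefficients

variable {d k : ℕ}

lemma conj_coeff (hk : k ≤ d) : conj (coeff d k) = coeff d (d - k) := by
  rw [coeff, coeff, map_div₀, ← Complex.exp_conj, Complex.conj_ofReal, Nat.cast_sub hk]
  simp only [map_div₀, map_mul, map_sub, Complex.conj_ofReal, Complex.conj_I, map_natCast,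
    map_ofNat]
  congr 2
  ring

lemma conj_coeff_mul_coeff (d k : ℕ) : conj (coeff d k) * coeff d k = 1 / 2 := by
  have harg : 2 * (Real.pi : ℂ) * Complex.I * (2 * (k : ℂ) - d) / (8 * d) =
      (2 * Real.pi * (2 * k - d) / (8 * d) : ℝ) * Complex.I := by
    push_cast
    ring
  rw [Complex.conj_mul', coeff, harg, norm_div, Complex.norm_exp_ofReal_mul_I, Complex.norm_real,
    Real.norm_of_nonneg (Real.sqrt_nonneg 2), ← Complex.ofReal_pow, div_pow,
    Real.sq_sqrt zero_le_two]
  norm_num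

lemma root_pow (hd : d ≠ 0) (k : ℕ) : root d ^ k = -4 * coeff d k ^ 4 := by
  have hsqrt : (Real.sqrt 2 : ℂ) ^ 4 = 4 := by
    rw [← Complex.ofReal_pow, show 4 = 2 * 2 from rfl, pow_mul, Real.sq_sqrt zero_le_two]
    norm_num
  have harg : (k : ℂ) * (2 * Real.pi * Complex.I / d) =
      (4 : ℕ) * (2 * Real.pi * Complex.I * (2 * k - d) / (8 * d)) + Real.pi * Complex.I := by
    field_simp
    push_cast
    ring
  rw [root, coeff, ← Complex.exp_nat_mul, harg, Complex.exp_add_pi_mul_I, div_pow, hsqrt,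
    Complex.exp_nat_mul]
  ring

lemma conj_root_pow (hk : k ≤ d) : conj (root d ^ k) = root d ^ (d - k) := by
  obtain rfl | hd := eq_or_ne d 0
  · obtain rfl := Nat.le_zero.1 hk
    simp
  · simp only [root_pow hd, ← conj_coeff hk, map_mul, map_neg, map_pow, map_ofNat]

lemma conj_coeff_mul_root_pow (hd : d ≠ 0) (k : ℕ) :
    conj (coeff d k) * root d ^ k = -2 * coeff d k ^ 3 := by
  rw [root_pow hd]
  linear_combination -4 * coeff d k ^ 3 * conj_coeff_mul_coeff d k

end Coefficients

variable {𝓐 : Type*} [Ring 𝓐] [StarRing 𝓐] [Algebra ℂ 𝓐]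

/-- The operator `C₁⁽ᵏ⁾` paired with `A₁ᵏ`; the inverse power `B⁻ᵏ` is written `(star B) ^ k`. -/
noncomputable def C₁ (d : ℕ) (B₁ B₂ : 𝓐) (k : ℕ) : 𝓐 :=
  coeff d k • star B₁ ^ k + (conj (coeff d k) * root d ^ k) • star B₂ ^ k

/-- The operator `C₂⁽ᵏ⁾` paired with `A₂ᵏ`; the inverse power `B⁻ᵏ` is written `(star B) ^ k`. -/
noncomputable def C₂ (d : ℕ) (B₁ B₂ : 𝓐) (k : ℕ) : 𝓐 :=
  conj (coeff d k) • star B₁ ^ k + coeff d k • star B₂ ^ k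

/-- The SATWAP Bell operator `B_d` of the observables `A₁, A₂` and `B₁, B₂`. -/
noncomputable def bell (d : ℕ) (A₁ A₂ B₁ B₂ : 𝓐) : 𝓐 :=
  ∑ k ∈ Icc 1 (d - 1), (A₁ ^ k * C₁ d B₁ B₂ k + A₂ ^ k * C₂ d B₁ B₂ k)

/-- The operator `P₁,ₖ = (A₁ᵏ)† - C₁⁽ᵏ⁾` of the sum-of-squares decomposition. -/
noncomputable def P₁ (d : ℕ) (A₁ B₁ B₂ : 𝓐) (k : ℕ) : 𝓐 :=
  star (A₁ ^ k) - C₁ d B₁ B₂ k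

/-- The operator `P₂,ₖ = (A₂ᵏ)† - C₂⁽ᵏ⁾` of the sum-of-squares decomposition. -/
noncomputable def P₂ (d : ℕ) (A₂ B₁ B₂ : 𝓐) (k : ℕ) : 𝓐 :=
  star (A₂ ^ k) - C₂ d B₁ B₂ k

variable {d k : ℕ} {A A₁ A₂ B₁ B₂ : 𝓐}

lemma commute_C₁ (hk : k ≤ d) (hB₁ : B₁ * star B₁ = 1) (hB₂ : B₂ * star B₂ = 1)
    (hB₁d : B₁ ^ d = 1) (hB₂d : B₂ ^ d = 1) (h₁ : Commute A B₁) (h₂ : Commute A B₂) :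
    Commute A (C₁ d B₁ B₂ k) := by
  rw [C₁, star_pow_eq_pow_sub hB₁ hB₁d hk, star_pow_eq_pow_sub hB₂ hB₂d hk]
  exact ((h₁.pow_right _).smul_right _).add_right ((h₂.pow_right _).smul_right _)

lemma commute_C₂ (hk : k ≤ d) (hB₁ : B₁ * star B₁ = 1) (hB₂ : B₂ * star B₂ = 1)
    (hB₁d : B₁ ^ d = 1) (hB₂d : B₂ ^ d = 1) (h₁ : Commute A B₁) (h₂ : Commute A B₂) :
    Commute A (C₂ d B₁ B₂ k) := by
  rw [C₂, star_pow_eq_pow_sub hB₁ hB₁d hk, star_pow_eq_pow_sub hB₂ hB₂d hk]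
  exact ((h₁.pow_right _).smul_right _).add_right ((h₂.pow_right _).smul_right _)

variable [StarModule ℂ 𝓐]

lemma star_C₁ (hk : k ≤ d) (hB₁ : B₁ * star B₁ = 1) (hB₂ : B₂ * star B₂ = 1)
    (hB₁d : B₁ ^ d = 1) (hB₂d : B₂ ^ d = 1) : star (C₁ d B₁ B₂ k) = C₁ d B₁ B₂ (d - k) := by
  simp only [C₁, star_pow_eq_pow_sub hB₁ hB₁d hk, star_pow_eq_pow_sub hB₂ hB₂d hk, ← conj_coeff hk,
    ← conj_root_pow hk, star_add, star_smul, star_pow, Complex.star_def, map_mul]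

lemma star_C₂ (hk : k ≤ d) (hB₁ : B₁ * star B₁ = 1) (hB₂ : B₂ * star B₂ = 1)
    (hB₁d : B₁ ^ d = 1) (hB₂d : B₂ ^ d = 1) : star (C₂ d B₁ B₂ k) = C₂ d B₁ B₂ (d - k) := by
  simp only [C₂, star_pow_eq_pow_sub hB₁ hB₁d hk, star_pow_eq_pow_sub hB₂ hB₂d hk, ← conj_coeff hk,
    star_add, star_smul, star_pow, Complex.star_def]

theorem isSelfAdjoint_bell (hA₁ : A₁ * star A₁ = 1) (hA₂ : A₂ * star A₂ = 1)
    (hB₁ : B₁ * star B₁ = 1) (hB₂ : B₂ * star B₂ = 1)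
    (hA₁d : A₁ ^ d = 1) (hA₂d : A₂ ^ d = 1) (hB₁d : B₁ ^ d = 1) (hB₂d : B₂ ^ d = 1)
    (h₁₁ : Commute A₁ B₁) (h₁₂ : Commute A₁ B₂) (h₂₁ : Commute A₂ B₁) (h₂₂ : Commute A₂ B₂) :
    IsSelfAdjoint (bell d A₁ A₂ B₁ B₂) := by
  rw [isSelfAdjoint_iff, bell, star_sum, ← sum_Icc_one_reflect (fun k => A₁ ^ k * _ + _)]
  refine sum_congr rfl fun k hk => ?_
  have hkd : k ≤ d := by grind
  have hterm₁ : star (A₁ ^ k * C₁ d B₁ B₂ k) = A₁ ^ (d - k) * C₁ d B₁ B₂ (d - k) := by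
    rw [star_mul, star_C₁ hkd hB₁ hB₂ hB₁d hB₂d, star_pow, star_pow_eq_pow_sub hA₁ hA₁d hkd]
    exact ((commute_C₁ (d.sub_le k) hB₁ hB₂ hB₁d hB₂d h₁₁ h₁₂).pow_left _).symm
  have hterm₂ : star (A₂ ^ k * C₂ d B₁ B₂ k) = A₂ ^ (d - k) * C₂ d B₁ B₂ (d - k) := by
    rw [star_mul, star_C₂ hkd hB₁ hB₂ hB₁d hB₂d, star_pow, star_pow_eq_pow_sub hA₂ hA₂d hkd]
    exact ((commute_C₂ (d.sub_le k) hB₁ hB₂ hB₁d hB₂d h₂₁ h₂₂).pow_left _).symm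
  rw [star_add, hterm₁, hterm₂]

lemma star_C₁_mul_self_add_star_C₂_mul_self (hd : d ≠ 0) (hB₁ : B₁ * star B₁ = 1)
    (hB₂ : B₂ * star B₂ = 1) (k : ℕ) :
    star (C₁ d B₁ B₂ k) * C₁ d B₁ B₂ k + star (C₂ d B₁ B₂ k) * C₂ d B₁ B₂ k = 2 := by
  have ha := conj_coeff_mul_coeff d k
  rw [C₁, C₂, conj_coeff_mul_root_pow hd, star_mul_self_add_star_mul_self_of_orthonormal]
  · rw [star_pow, star_star, star_pow, star_star, pow_mul_pow_eq_one k hB₁,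
      pow_mul_pow_eq_one k hB₂, one_add_one_eq_two]
  all_goals simp only [Complex.star_def, map_mul, map_neg, map_pow, map_ofNat, Complex.conj_conj]
  · linear_combination 2 * ha
  · linear_combination (4 * (conj (coeff d k) * coeff d k) ^ 2 +
      2 * (conj (coeff d k) * coeff d k) + 2) * ha
  · linear_combination (-2 * coeff d k ^ 2) * ha

lemma star_P₁_mul_self_add_star_P₂_mul_self (hd : d ≠ 0) (hA₁ : A₁ * star A₁ = 1)
    (hA₂ : A₂ * star A₂ = 1) (hB₁ : B₁ * star B₁ = 1) (hB₂ : B₂ * star B₂ = 1) (k : ℕ) :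
    star (P₁ d A₁ B₁ B₂ k) * P₁ d A₁ B₁ B₂ k + star (P₂ d A₂ B₁ B₂ k) * P₂ d A₂ B₁ B₂ k =
      4 - ((A₁ ^ k * C₁ d B₁ B₂ k + A₂ ^ k * C₂ d B₁ B₂ k) +
        star (A₁ ^ k * C₁ d B₁ B₂ k + A₂ ^ k * C₂ d B₁ B₂ k)) := by
  have hA₁k : A₁ ^ k * star (A₁ ^ k) = 1 := by rw [star_pow, pow_mul_pow_eq_one k hA₁]
  have hA₂k : A₂ ^ k * star (A₂ ^ k) = 1 := by rw [star_pow, pow_mul_pow_eq_one k hA₂]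
  rw [P₁, P₂, star_star_sub_mul_star_sub, star_star_sub_mul_star_sub, hA₁k, hA₂k,
    eq_sub_of_add_eq (star_C₁_mul_self_add_star_C₂_mul_self hd hB₁ hB₂ k), star_add,
    show (4 : 𝓐) = 1 + 1 + 2 by norm_num]
  abel

theorem sum_star_P_mul_self (hd : d ≠ 0) (hA₁ : A₁ * star A₁ = 1) (hA₂ : A₂ * star A₂ = 1)
    (hB₁ : B₁ * star B₁ = 1) (hB₂ : B₂ * star B₂ = 1) :
    ∑ k ∈ Icc 1 (d - 1), (star (P₁ d A₁ B₁ B₂ k) * P₁ d A₁ B₁ B₂ k +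
        star (P₂ d A₂ B₁ B₂ k) * P₂ d A₂ B₁ B₂ k) =
      (4 * ((d : ℂ) - 1)) • 1 - (bell d A₁ A₂ B₁ B₂ + star (bell d A₁ A₂ B₁ B₂)) := by
  have hconst : ∑ _k ∈ Icc 1 (d - 1), (4 : 𝓐) = (4 * ((d : ℂ) - 1)) • 1 := by
    rw [sum_const, Nat.card_Icc, Nat.add_sub_cancel, ← Nat.cast_smul_eq_nsmul ℂ,
      Nat.cast_pred (Nat.pos_of_ne_zero hd), ← map_ofNat (algebraMap ℂ 𝓐) 4,
      Algebra.algebraMap_eq_smul_one, smul_smul, mul_comm]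
  simp only [star_P₁_mul_self_add_star_P₂_mul_self hd hA₁ hA₂ hB₁ hB₂, sum_sub_distrib,
    sum_add_distrib, hconst, bell, star_sum, star_add]

end Satwap

open Satwap

theorem satwap_sos_verification_general {𝓐 : Type*} [Ring 𝓐] [StarRing 𝓐] [Algebra ℂ 𝓐]
    [StarModule ℂ 𝓐] {d : ℕ} (hd : d ≠ 0) {A₁ A₂ B₁ B₂ : 𝓐}
    (hA₁ : A₁ * star A₁ = 1) (hA₂ : A₂ * star A₂ = 1)
    (hB₁ : B₁ * star B₁ = 1) (hB₂ : B₂ * star B₂ = 1) :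
    (2 * ((d : ℂ) - 1)) • (1 : 𝓐) - (ℜ (bell d A₁ A₂ B₁ B₂) : 𝓐) =
      (1 / 2 : ℂ) • ∑ k ∈ Icc 1 (d - 1), (star (P₁ d A₁ B₁ B₂ k) * P₁ d A₁ B₁ B₂ k +
        star (P₂ d A₂ B₁ B₂ k) * P₂ d A₂ B₁ B₂ k) ∧
    ∀ φ : 𝓐 →ₗ[ℂ] ℂ, (∀ x, 0 ≤ φ (star x * x)) → φ 1 = 1 →
      (φ (bell d A₁ A₂ B₁ B₂)).re ≤ 2 * ((d : ℝ) - 1) := by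
  have hsum := sum_star_P_mul_self hd hA₁ hA₂ hB₁ hB₂
  constructor
  · rw [hsum, realPart_apply_coe]
    module
  · intro φ hφ hφ1
    have hnonneg : 0 ≤ φ (∑ k ∈ Icc 1 (d - 1), (star (P₁ d A₁ B₁ B₂ k) * P₁ d A₁ B₁ B₂ k +
        star (P₂ d A₂ B₁ B₂ k) * P₂ d A₂ B₁ B₂ k)) := by
      simp only [map_sum, map_add]
      exact sum_nonneg fun k _ => add_nonneg (hφ _) (hφ _)
    have hre := (Complex.nonneg_iff.1 hnonneg).1
    have hconst : (4 * ((d : ℂ) - 1)).re = 4 * ((d : ℝ) - 1) := by simp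
    rw [hsum, map_sub, map_smul, hφ1, smul_eq_mul, mul_one, map_add, Complex.sub_re,
      Complex.add_re, re_map_star_of_nonneg hφ, hconst] at hre
    linarith

/-- SATWAP SOS verification: the shifted SATWAP Bell operator equals the
sum-of-squares `(1/2) Σ_k (P_{1,k}† P_{1,k} + P_{2,k}† P_{2,k})`; in
particular `⟨ψ, B_d ψ⟩ ≤ 2(d−1)` for unit vectors `ψ`. -/
theorem satwap_sos_verification {d nn : ℕ} (hd : 2 ≤ d)
    (A1 A2 B1 B2 : Matrix (Fin nn) (Fin nn) ℂ)
    (hA1u : star A1 * A1 = 1 ∧ A1 * star A1 = 1)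
    (hA2u : star A2 * A2 = 1 ∧ A2 * star A2 = 1)
    (hB1u : star B1 * B1 = 1 ∧ B1 * star B1 = 1)
    (hB2u : star B2 * B2 = 1 ∧ B2 * star B2 = 1)
    (hA1d : A1 ^ d = 1) (hA2d : A2 ^ d = 1) (hB1d : B1 ^ d = 1) (hB2d : B2 ^ d = 1)
    (hcomm : ∀ j k : ℕ, Commute (A1 ^ j) (B1 ^ k) ∧ Commute (A1 ^ j) (B2 ^ k) ∧
      Commute (A2 ^ j) (B1 ^ k) ∧ Commute (A2 ^ j) (B2 ^ k))
    (a : ℕ → ℂ)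
    (ha : ∀ k : ℕ, a k = Complex.exp
      (2 * (Real.pi : ℂ) * Complex.I * (2 * (k : ℂ) - (d : ℂ)) / (8 * (d : ℂ)))
        / (Real.sqrt 2 : ℂ))
    (ω : ℂ) (hω : ω = Complex.exp (2 * (Real.pi : ℂ) * Complex.I / (d : ℂ)))
    (C1 C2 P1 P2 : ℕ → Matrix (Fin nn) (Fin nn) ℂ)
    (hC1 : ∀ k, C1 k = a k • (star B1) ^ k + ((starRingEnd ℂ) (a k) * ω ^ k) • (star B2) ^ k)
    (hC2 : ∀ k, C2 k = (starRingEnd ℂ) (a k) • (star B1) ^ k + a k • (star B2) ^ k)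
    (Bell : Matrix (Fin nn) (Fin nn) ℂ)
    (hBell : Bell = ∑ k ∈ Finset.Icc 1 (d - 1), (A1 ^ k * C1 k + A2 ^ k * C2 k))
    (hP1 : ∀ k, P1 k = star (A1 ^ k) - C1 k)
    (hP2 : ∀ k, P2 k = star (A2 ^ k) - C2 k) :
    ((2 * ((d : ℂ) - 1)) • (1 : Matrix (Fin nn) (Fin nn) ℂ) - Bell =
      (1/2 : ℂ) • ∑ k ∈ Finset.Icc 1 (d - 1),
        (star (P1 k) * P1 k + star (P2 k) * P2 k)) ∧
    (∀ ψ : Fin nn → ℂ, star ψ ⬝ᵥ ψ = 1 →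
      (star ψ ⬝ᵥ Bell.mulVec ψ).re ≤ 2 * ((d : ℝ) - 1)) := by
  obtain rfl : a = coeff d := funext ha
  obtain rfl : ω = root d := hω
  obtain rfl : C1 = C₁ d B1 B2 := funext hC1
  obtain rfl : C2 = C₂ d B1 B2 := funext hC2
  obtain rfl : P1 = P₁ d A1 B1 B2 := funext hP1
  obtain rfl : P2 = P₂ d A2 B1 B2 := funext hP2
  obtain rfl : Bell = bell d A1 A2 B1 B2 := hBell
  have hself : IsSelfAdjoint (bell d A1 A2 B1 B2) := by
    obtain ⟨h₁₁, h₁₂, h₂₁, h₂₂⟩ := hcomm 1 1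
    simp only [pow_one] at h₁₁ h₁₂ h₂₁ h₂₂
    exact isSelfAdjoint_bell hA1u.2 hA2u.2 hB1u.2 hB2u.2 hA1d hA2d hB1d hB2d h₁₁ h₁₂ h₂₁ h₂₂
  obtain ⟨hsos, hbound⟩ :=
    satwap_sos_verification_general (by omega : d ≠ 0) hA1u.2 hA2u.2 hB1u.2 hB2u.2
  rw [hself.coe_realPart] at hsos
  let vectorState (ψ : Fin nn → ℂ) : Matrix (Fin nn) (Fin nn) ℂ →ₗ[ℂ] ℂ :=
    dotProductBilin ℂ ℂ (star ψ) ∘ₗ (mulVecBilin ℂ ℂ).flip ψ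
  refine ⟨hsos, fun ψ hψ => hbound (vectorState ψ) (fun X => ?_) ?_⟩
  · exact (posSemidef_conjTranspose_mul_self X).dotProduct_mulVec_nonneg ψ
  · simpa [vectorState] using hψ
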